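/- Relative Oscillation Theorem, closed case: Let λ_0, λ_1 ∈ ℝ and for j = 0,1 let u_{j,−}(λ_j) be a solution of τ_j u = λ_j u with u_{j,−}(λ_j, 0) = 0 and u_{j,+}(λ_j) a solution of τ_j u = λ_j u with u_{j,+}(λ_j, N) = 0. Then E_{(−∞,λ_1]}(J_1) − E_{(−∞,λ_0]}(J_0) = #_{(0,N)}(u_{0,+}(λ_0), u_{1,−}(λ_1)) = #_{[0,N]}(u_{0,−}(λ_0), u_{1,+}(λ_1)). -/

import Mathlib

/-!
The proof is the Prüfer-angle argument carried out with signs only. For a solution `u` let `θ` be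
its Prüfer angle. The integer `⌈θ / π⌉` goes up by one exactly when the sign `sg u` changes, and for
two solutions `⌈(θ₁ - θ₀) / π⌉` is the difference of these integers plus the indicator `ahead` that
the reduced angle of `u₁` exceeds that of `u₀`, which is read off from the sign of the Wronskian.
The local identity `jSgn_step` says that `#_n` is the increment of `⌈(θ₁ - θ₀) / π⌉`, so that
`#_{[0,N]}` telescopes (`cntCC_eq`) to the difference of the numbers of sign changes of `u₁` and
`u₀`, up to boundary terms that are explicit when one of the solutions vanishes at the endpoint
(`ahead_left`, `ahead_right`).

It remains to count the eigenvalues `≤ z` of one Jacobi matrix by the sign changes of a solution.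
For a solution vanishing at `0` this is `evCount_eq_nodes`: by `nodes_mono` (the telescoped identity
for two spectral parameters, where every `#_n` is nonnegative) the count `nodes` is monotone in `z`
and strictly increases at each eigenvalue; it takes values in `[0, N - 1]`, and there are `N - 1`
different eigenvalues, so it is the eigenvalue counting function. For a solution vanishing at `N`,
`changes_plus` reduces to this case, because `#_n = 0` for two solutions of the same equation.
-/

open Real

noncomputable section

/-- The Jacobi difference expression `(τ u)(n) = a(n)u(n+1) + a(n-1)u(n-1) + b(n)u(n)`. -/
def jTau (a b : ℤ → ℝ) (u : ℤ → ℝ) (n : ℤ) : ℝ :=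
  a n * u (n + 1) + a (n - 1) * u (n - 1) + b n * u n

/-- `u` is a solution of `τ u = z u`: not identically zero and satisfying the recursion. -/
def IsJSolution (a b : ℤ → ℝ) (z : ℝ) (u : ℤ → ℝ) : Prop :=
  u ≠ 0 ∧ ∀ n : ℤ, jTau a b u n = z * u n

/-- The (N-1)×(N-1) Jacobi matrix with diagonal b(1),…,b(N-1) and
off-diagonal a(1),…,a(N-2). -/
def jMatrix (N : ℕ) (a b : ℤ → ℝ) : Matrix (Fin (N - 1)) (Fin (N - 1)) ℝ :=
  fun i j =>
    if (i : ℕ) = (j : ℕ) then b (((i : ℕ) : ℤ) + 1)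
    else if (i : ℕ) + 1 = (j : ℕ) then a (((i : ℕ) : ℤ) + 1)
    else if (j : ℕ) + 1 = (i : ℕ) then a (((j : ℕ) : ℤ) + 1)
    else 0

/-- `μ` is an eigenvalue of the matrix `J`. -/
def IsEV {m : ℕ} (J : Matrix (Fin m) (Fin m) ℝ) (μ : ℝ) : Prop :=
  ∃ v : Fin m → ℝ, v ≠ 0 ∧ J.mulVec v = μ • v

/-- The number of eigenvalues of `J` in `Ω`. -/
def evCount {m : ℕ} (J : Matrix (Fin m) (Fin m) ℝ) (Ω : Set ℝ) : ℕ :=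
  {μ ∈ Ω | IsEV J μ}.ncard

/-- The (modified) Wronskian `W_n(u₀,u₁) = u₀(n)a₁(n)u₁(n+1) - u₁(n)a₀(n)u₀(n+1)`. -/
def jW (a0 a1 : ℤ → ℝ) (u0 u1 : ℤ → ℝ) (n : ℤ) : ℝ :=
  u0 n * a1 n * u1 (n + 1) - u1 n * a0 n * u0 (n + 1)

open Classical in
/-- The weighted node sign `#_n(u₀,u₁) ∈ {-1,0,1}` of the Wronskian at `n`. -/
def jSgn (a0 a1 u0 u1 : ℤ → ℝ) (n : ℤ) : ℤ :=
  if jW a0 a1 u0 u1 (n + 1) * u0 (n + 1) * u1 (n + 1) > 0 ∧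
      (jW a0 a1 u0 u1 n * jW a0 a1 u0 u1 (n + 1) < 0 ∨
        (jW a0 a1 u0 u1 n = 0 ∧ jW a0 a1 u0 u1 (n + 1) ≠ 0)) then 1
  else if jW a0 a1 u0 u1 n * u0 (n + 1) * u1 (n + 1) > 0 ∧
      (jW a0 a1 u0 u1 n * jW a0 a1 u0 u1 (n + 1) < 0 ∨
        (jW a0 a1 u0 u1 n ≠ 0 ∧ jW a0 a1 u0 u1 (n + 1) = 0)) then -1
  else 0

/-- `#_{[m,n]}(u₀,u₁) = Σ_{j=m}^{n-1} #_j(u₀,u₁)`. -/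
def cntCC (a0 a1 u0 u1 : ℤ → ℝ) (m n : ℤ) : ℤ :=
  ∑ j ∈ Finset.Ico m n, jSgn a0 a1 u0 u1 j

open Classical in
/-- `#_{(m,n]}(u₀,u₁)`. -/
def cntOC (a0 a1 u0 u1 : ℤ → ℝ) (m n : ℤ) : ℤ :=
  cntCC a0 a1 u0 u1 m n - if jW a0 a1 u0 u1 m = 0 then 1 else 0

open Classical in
/-- `#_{[m,n)}(u₀,u₁)`. -/
def cntCO (a0 a1 u0 u1 : ℤ → ℝ) (m n : ℤ) : ℤ :=
  cntCC a0 a1 u0 u1 m n + if jW a0 a1 u0 u1 n = 0 then 1 else 0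

open Classical in
/-- `#_{(m,n)}(u₀,u₁)`. -/
def cntOO (a0 a1 u0 u1 : ℤ → ℝ) (m n : ℤ) : ℤ :=
  cntCC a0 a1 u0 u1 m n - (if jW a0 a1 u0 u1 m = 0 then 1 else 0)
    + (if jW a0 a1 u0 u1 n = 0 then 1 else 0)

/-- `n` is a node of `u`: `u(n) = 0` or `a(n)u(n)u(n+1) > 0`. -/
def IsNode (a u : ℤ → ℝ) (n : ℤ) : Prop :=
  u n = 0 ∨ a n * u n * u (n + 1) > 0

open Classical in
/-- The number of nodes of `u` between `m` and `l`: nodes `n` with `m < n < l`,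
plus one if `m` is a node with `u(m) ≠ 0`. -/
def nodeCount (a u : ℤ → ℝ) (m l : ℤ) : ℕ :=
  ((Finset.Ioo m l).filter (fun n => IsNode a u n)).card +
    if IsNode a u m ∧ u m ≠ 0 then 1 else 0

/-- `ρ, θ` are Prüfer variables for `u` (w.r.t. the coefficient `a`). -/
def IsPrufer (a u ρ θ : ℤ → ℝ) : Prop :=
  ∀ n : ℤ, 0 < ρ n ∧ u n = ρ n * Real.sin (θ n) ∧
    -(a n) * u (n + 1) = ρ n * Real.cos (θ n) ∧
    ⌈θ n / π⌉ ≤ ⌈θ (n + 1) / π⌉ ∧ ⌈θ (n + 1) / π⌉ ≤ ⌈θ n / π⌉ + 1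

/-! ### Solutions, signs and sign changes -/

/-- The sign of `u` at `n`, where a zero of `u` inherits the sign opposite to `u (n+1)`; for a
solution (with negative `a`) this is the sign of `u (n-1)`. It is the sign of
`(-1)^(⌈θ n / π⌉ - 1)` for a Prüfer angle `θ` of `u`. -/
def sg (u : ℤ → ℝ) (n : ℤ) : ℝ :=
  if 0 < u n then 1 else if u n < 0 then -1 else if 0 < u (n + 1) then -1 else 1

open Classical in
/-- Indicator of a sign change of `u` between `n` and `n+1`: the increment of `⌈θ / π⌉`. -/
def chg (u : ℤ → ℝ) (n : ℤ) : ℤ := if sg u n = sg u (n + 1) then 0 else 1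

open Classical in
/-- Indicator that the Prüfer angle of `u1` at `n`, reduced to `(0, π]`, exceeds that of `u0`. -/
def ahead (a0 a1 u0 u1 : ℤ → ℝ) (n : ℤ) : ℤ :=
  if 0 < sg u0 n * sg u1 n * jW a0 a1 u0 u1 n then 1 else 0

/-- A solution of `τ u = z u` to the right of `0`: the recursion is only required at `n ≥ 1`, and
the initial data do not vanish. -/
def RSol (a b : ℤ → ℝ) (z : ℝ) (u : ℤ → ℝ) : Prop :=
  (u 0 ≠ 0 ∨ u 1 ≠ 0) ∧ ∀ n : ℤ, 1 ≤ n → jTau a b u n = z * u n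

lemma RSol.recur {a b : ℤ → ℝ} {z : ℝ} {u : ℤ → ℝ} (h : RSol a b z u) {n : ℤ} (hn : 0 ≤ n) :
    a (n + 1) * u (n + 1 + 1) = (z - b (n + 1)) * u (n + 1) - a n * u n := by
  have := h.2 (n + 1) (by omega)
  simp only [jTau, add_sub_cancel_right] at this
  linarith

lemma RSol.ne {a b : ℤ → ℝ} {z : ℝ} {u : ℤ → ℝ} (ha : ∀ n, a n < 0) (h : RSol a b z u)
    {n : ℤ} (hn : 0 ≤ n) : u n ≠ 0 ∨ u (n + 1) ≠ 0 := by
  induction n, hn using Int.leInduction with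
  | base => simpa using h.1
  | succ n hn ih =>
    by_contra! hc
    have h1 := h.recur hn
    rw [hc.1, hc.2] at h1
    have : u n = 0 := by
      have := (ha n).ne
      simpa [this] using h1
    rcases ih with ih | ih
    · exact ih this
    · exact ih hc.1

lemma IsJSolution.rsol {a b : ℤ → ℝ} {z : ℝ} {u : ℤ → ℝ} (ha : ∀ n, a n < 0)
    (h : IsJSolution a b z u) : RSol a b z u := by
  refine ⟨?_, fun n _ => h.2 n⟩
  by_contra! hc
  apply h.1
  have key : ∀ n : ℤ, u n = 0 ∧ u (n + 1) = 0 := by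
    intro n
    induction n using Int.induction_on with
    | zero => simpa using hc
    | succ n ih =>
      have h1 := h.2 ((n : ℤ) + 1)
      simp only [jTau, add_sub_cancel_right, ih.1, ih.2] at h1
      have := (ha ((n : ℤ) + 1)).ne
      exact ⟨ih.2, by simpa [this] using h1⟩
    | pred n ih =>
      have h1 := h.2 (-(n : ℤ))
      simp only [jTau, ih.1, ih.2] at h1
      have := (ha (-(n : ℤ) - 1)).ne
      exact ⟨by simpa [this] using h1, by simpa using ih.1⟩
  funext n
  exact (key n).1

lemma sg_cases (u : ℤ → ℝ) (n : ℤ) : sg u n = 1 ∨ sg u n = -1 := by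
  unfold sg; split_ifs <;> simp

lemma sg_sq (u : ℤ → ℝ) (n : ℤ) : sg u n ^ 2 = 1 := by
  rcases sg_cases u n with h | h <;> rw [h] <;> norm_num

lemma sg_mul_pos {u : ℤ → ℝ} {n : ℤ} (h : u n ≠ 0) : 0 < sg u n * u n := by
  unfold sg
  rcases lt_or_gt_of_ne h with h | h
  · simp [h, not_lt.2 h.le]
  · simp [h]

lemma sg_mul_nonneg (u : ℤ → ℝ) (n : ℤ) : 0 ≤ sg u n * u n := by
  by_cases h : u n = 0
  · simp [h]
  · exact (sg_mul_pos h).le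

lemma sg_mul_succ_neg {u : ℤ → ℝ} {n : ℤ} (h : u n = 0) (hs : u (n + 1) ≠ 0) :
    sg u n * u (n + 1) < 0 := by
  unfold sg
  rcases lt_or_gt_of_ne hs with hs | hs
  · simp [h, hs, not_lt.2 hs.le]
  · simp [h, hs]

/-- A zero of a solution carries the sign of the preceding value, because a solution changes sign
across a zero. -/
lemma RSol.sg_zero {a b : ℤ → ℝ} {z : ℝ} {u : ℤ → ℝ} (ha : ∀ n, a n < 0) (h : RSol a b z u)
    {n : ℤ} (hn : 0 ≤ n) (h0 : u (n + 1) = 0) : sg u (n + 1) = sg u n := by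
  have hne : u n ≠ 0 := by simpa [h0] using h.ne ha hn
  have hne' : u (n + 1 + 1) ≠ 0 := by simpa [h0] using h.ne ha (n := n + 1) (by omega)
  have h1 := h.recur hn
  have h2 := sg_mul_pos hne
  have h3 := sg_mul_succ_neg h0 hne'
  have a1 := ha n
  have a2 := ha (n + 1)
  rw [h0] at h1
  rcases sg_cases u (n + 1) with e | e <;> rcases sg_cases u n with e' | e' <;>
    rw [e] at h3 ⊢ <;> rw [e'] at h2 ⊢ <;> exfalso <;> nlinarith

/-! ### The local identity -/

lemma jSgn_eq (a0 a1 u0 u1 : ℤ → ℝ) (n : ℤ) :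
    jSgn a0 a1 u0 u1 n =
      (if 0 < jW a0 a1 u0 u1 (n + 1) * (u0 (n + 1) * u1 (n + 1)) then 1 else 0) -
      (if 0 < jW a0 a1 u0 u1 n * (u0 (n + 1) * u1 (n + 1)) then 1 else 0) := by
  unfold jSgn
  simp only [mul_assoc]
  generalize jW a0 a1 u0 u1 (n + 1) = B
  generalize jW a0 a1 u0 u1 n = A
  generalize u0 (n + 1) * u1 (n + 1) = p
  rcases lt_trichotomy A 0 with hA | hA | hA <;> rcases lt_trichotomy B 0 with hB | hB | hB <;>
    rcases lt_trichotomy p 0 with hp | hp | hp <;>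
    simp [hA, hB, hp, mul_pos_iff, mul_neg_iff, ne_of_lt, ne_of_gt, not_lt_of_gt]

/-- `sg u n * u (n+1)` detects sign changes. -/
lemma chg_eq {u : ℤ → ℝ} {n : ℤ} (h : u (n + 1) ≠ 0) :
    chg u n = if 0 < sg u n * u (n + 1) then 0 else 1 := by
  have h1 := sg_mul_pos h
  unfold chg
  rcases sg_cases u (n + 1) with e | e <;> rcases sg_cases u n with e' | e' <;>
    rw [e] at h1 ⊢ <;> rw [e'] <;> norm_num at h1 ⊢ <;> simp [h1, h1.le]

lemma sg_mul_succ_cases {u : ℤ → ℝ} {n : ℤ} (e : u (n + 1) ≠ 0) :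
    (0 < sg u n * u (n+1) ∧ 0 < u n * u (n+1)) ∨ (sg u n * u (n+1) < 0 ∧ u n * u (n+1) ≤ 0) := by
  by_cases hu : u n = 0
  · exact Or.inr ⟨sg_mul_succ_neg hu e, by simp [hu]⟩
  · have h := sg_mul_pos hu
    have f : (sg u n * u n) * (sg u n * u (n+1)) = u n * u (n+1) := by
      linear_combination (u n * u (n+1)) * sg_sq u n
    have hs : sg u n * u (n+1) ≠ 0 := by
      intro h0
      rw [h0] at f
      simp_all
    rcases lt_or_gt_of_ne hs with k | k
    · exact Or.inr ⟨k, f ▸ (mul_neg_of_pos_of_neg h k).le⟩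
    · exact Or.inl ⟨k, f ▸ mul_pos h k⟩

/-- The local identity behind the theory: `#_n` is the increment of `⌈(θ₁ - θ₀) / π⌉`. -/
lemma jSgn_step {a0 b0 a1 b1 : ℤ → ℝ} {z0 z1 : ℝ} {u0 u1 : ℤ → ℝ}
    (ha0 : ∀ n, a0 n < 0) (ha1 : ∀ n, a1 n < 0)
    (h0 : RSol a0 b0 z0 u0) (h1 : RSol a1 b1 z1 u1) {n : ℤ} (hn : 0 ≤ n) :
    jSgn a0 a1 u0 u1 n =
      (chg u1 n - chg u0 n) + (ahead a0 a1 u0 u1 (n + 1) - ahead a0 a1 u0 u1 n) := by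
  rw [jSgn_eq]
  have r0 := h0.recur hn
  have r1 := h1.recur hn
  have A0 := ha0 n
  have A1 := ha1 n
  by_cases e0 : u0 (n + 1) = 0 <;> by_cases e1 : u1 (n + 1) = 0
  · have s0 := h0.sg_zero ha0 hn e0
    have s1 := h1.sg_zero ha1 hn e1
    simp [chg, ahead, jW, e0, e1, s0, s1]
  · -- the zero of `u0` forces `W_n` and `W_{n+1}` to have the same sign
    have s0 := h0.sg_zero ha0 hn e0
    have hW : jW a0 a1 u0 u1 (n + 1) = a0 n * u0 n * u1 (n + 1) := by
      simp only [jW]; rw [e0] at r0 ⊢; linear_combination -u1 (n+1) * r0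
    have hW' : jW a0 a1 u0 u1 n = a1 n * u0 n * u1 (n + 1) := by
      simp only [jW]; rw [e0]; ring
    have p0 : 0 < sg u0 n * u0 n := sg_mul_pos (by simpa [e0] using h0.ne ha0 hn)
    have p1 := sg_mul_pos e1
    have c0 : chg u0 n = 0 := by simp [chg, s0]
    have e : ¬ 0 < sg u0 (n+1) * sg u1 (n+1) * jW a0 a1 u0 u1 (n+1) := by
      rw [hW, s0]
      have := mul_pos p0 p1
      nlinarith
    have e' : 0 < sg u0 n * sg u1 n * jW a0 a1 u0 u1 n ↔ ¬ 0 < sg u1 n * u1 (n + 1) := by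
      rw [hW', show sg u0 n * sg u1 n * (a1 n * u0 n * u1 (n+1)) =
        (a1 n * (sg u0 n * u0 n)) * (sg u1 n * u1 (n+1)) by ring,
        mul_pos_iff, not_lt, le_iff_lt_or_eq]
      have : sg u1 n * u1 (n + 1) ≠ 0 := by
        apply mul_ne_zero _ e1
        rcases sg_cases u1 n with h | h <;> rw [h] <;> norm_num
      have hneg := mul_neg_of_neg_of_pos A1 p0
      simp [this, hneg, hneg.not_gt]
    rw [c0, chg_eq e1, ahead, ahead, if_neg e]
    simp only [e', e0]
    by_cases q : 0 < sg u1 n * u1 (n + 1) <;> simp [q]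
  · -- likewise for a zero of `u1`
    have s1 := h1.sg_zero ha1 hn e1
    have hW : jW a0 a1 u0 u1 (n + 1) = -(a1 n * u1 n * u0 (n + 1)) := by
      simp only [jW]; rw [e1] at r1 ⊢; linear_combination u0 (n+1) * r1
    have hW' : jW a0 a1 u0 u1 n = -(a0 n * u1 n * u0 (n + 1)) := by
      simp only [jW]; rw [e1]; ring
    have p1 : 0 < sg u1 n * u1 n := sg_mul_pos (by simpa [e1] using h1.ne ha1 hn)
    have p0 := sg_mul_pos e0
    have c1 : chg u1 n = 0 := by simp [chg, s1]
    have e : 0 < sg u0 (n+1) * sg u1 (n+1) * jW a0 a1 u0 u1 (n+1) := by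
      rw [hW, s1]
      have := mul_pos p0 p1
      nlinarith
    have e' : 0 < sg u0 n * sg u1 n * jW a0 a1 u0 u1 n ↔ 0 < sg u0 n * u0 (n + 1) := by
      rw [hW', show sg u0 n * sg u1 n * -(a0 n * u1 n * u0 (n+1)) =
        (-a0 n * (sg u1 n * u1 n)) * (sg u0 n * u0 (n+1)) by ring,
        mul_pos_iff_of_pos_left (mul_pos (neg_pos.2 A0) p1)]
    rw [c1, chg_eq e0, ahead, ahead, if_pos e]
    simp only [e', e1]
    by_cases q : 0 < sg u0 n * u0 (n + 1) <;> simp [q]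
  · have p0 := sg_mul_pos e0
    have p1 := sg_mul_pos e1
    have pp := mul_pos p0 p1
    have hB : 0 < jW a0 a1 u0 u1 (n + 1) * (u0 (n + 1) * u1 (n + 1)) ↔
        0 < sg u0 (n+1) * sg u1 (n+1) * jW a0 a1 u0 u1 (n+1) := by
      have f : sg u0 (n+1) * sg u1 (n+1) * jW a0 a1 u0 u1 (n+1) *
          ((sg u0 (n+1) * u0 (n+1)) * (sg u1 (n+1) * u1 (n+1))) =
          jW a0 a1 u0 u1 (n+1) * (u0 (n + 1) * u1 (n + 1)) := by
        linear_combination (jW a0 a1 u0 u1 (n+1) * u0 (n + 1) * u1 (n + 1)) *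
          (sg u1 (n+1) ^ 2 * sg_sq u0 (n+1) + sg_sq u1 (n+1))
      rw [← f, mul_pos_iff_of_pos_right pp]
    simp only [ahead, hB, chg_eq e0, chg_eq e1]
    have hA : jW a0 a1 u0 u1 n * (u0 (n + 1) * u1 (n + 1)) =
        a1 n * (u0 n * u0 (n+1)) * u1 (n+1) ^ 2 - a0 n * (u1 n * u1 (n+1)) * u0 (n+1) ^ 2 := by
      simp only [jW]; ring
    have sq0 : 0 < u0 (n+1) ^ 2 := by positivity
    have sq1 : 0 < u1 (n+1) ^ 2 := by positivity
    have f : sg u0 n * sg u1 n * jW a0 a1 u0 u1 n * ((sg u0 n * u0 (n+1)) * (sg u1 n * u1 (n+1)))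
        = jW a0 a1 u0 u1 n * (u0 (n + 1) * u1 (n + 1)) := by
      linear_combination (jW a0 a1 u0 u1 n * u0 (n + 1) * u1 (n + 1)) *
        (sg u1 n ^ 2 * sg_sq u0 n + sg_sq u1 n)
    rcases sg_mul_succ_cases e0 with ⟨k0, l0⟩ | ⟨k0, l0⟩ <;> rcases sg_mul_succ_cases e1 with ⟨k1, l1⟩ | ⟨k1, l1⟩
    · have g : 0 < jW a0 a1 u0 u1 n * (u0 (n + 1) * u1 (n + 1)) ↔
          0 < sg u0 n * sg u1 n * jW a0 a1 u0 u1 n := by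
        rw [← f, mul_pos_iff_of_pos_right (mul_pos k0 k1)]
      simp [k0, k1, g]
    · -- only `u1` changes sign
      have g : jW a0 a1 u0 u1 n * (u0 (n + 1) * u1 (n + 1)) < 0 := by
        rw [hA]
        have := mul_pos (mul_pos (neg_pos.2 A1) l0) sq1
        have := mul_nonneg (mul_nonneg (neg_pos.2 A0).le (neg_nonneg.2 l1)) sq0.le
        linarith
      have g' : 0 < sg u0 n * sg u1 n * jW a0 a1 u0 u1 n := by
        rw [← f] at g
        exact pos_of_mul_neg_left g (mul_neg_of_pos_of_neg k0 k1).le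
      simp [k0, k1.not_gt, g.not_gt, g']
    · -- only `u0` changes sign
      have g : 0 < jW a0 a1 u0 u1 n * (u0 (n + 1) * u1 (n + 1)) := by
        rw [hA]
        have := mul_pos (mul_pos (neg_pos.2 A0) l1) sq0
        have := mul_nonneg (mul_nonneg (neg_pos.2 A1).le (neg_nonneg.2 l0)) sq1.le
        linarith
      have g' : sg u0 n * sg u1 n * jW a0 a1 u0 u1 n < 0 := by
        rw [← f] at g
        exact neg_of_mul_pos_left g (mul_neg_of_neg_of_pos k0 k1).le
      simp [k0.not_gt, k1, g, g'.not_gt, sub_eq_neg_add]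
    · have g : 0 < jW a0 a1 u0 u1 n * (u0 (n + 1) * u1 (n + 1)) ↔
          0 < sg u0 n * sg u1 n * jW a0 a1 u0 u1 n := by
        rw [← f, mul_pos_iff_of_pos_right (mul_pos_of_neg_of_neg k0 k1)]
      simp [k0.not_gt, k1.not_gt, g]

/-! ### Telescoping and boundary terms -/

/-- The number of sign changes of `u` between `0` and `N`. -/
def changes (u : ℤ → ℝ) (N : ℕ) : ℤ := ∑ j ∈ Finset.Ico (0 : ℤ) N, chg u j

open Classical in
/-- The number of sign changes of `u` between `0` and `N`, less one if `u N ≠ 0`. For a solution of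
`τ u = z u` vanishing at `0` this is the number of eigenvalues `≤ z` (`evCount_eq_nodes`). -/
def nodes (u : ℤ → ℝ) (N : ℕ) : ℤ := changes u N - if u N = 0 then 0 else 1

lemma sum_Ico_int_succ (f : ℤ → ℤ) (N : ℕ) :
    ∑ j ∈ Finset.Ico (0 : ℤ) (N + 1 : ℕ), f j = ∑ j ∈ Finset.Ico (0 : ℤ) N, f j + f N := by
  have : Finset.Ico (0 : ℤ) (N + 1 : ℕ) = insert (N : ℤ) (Finset.Ico (0 : ℤ) N) := by
    ext; simp only [Finset.mem_Ico, Finset.mem_insert]; omega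
  rw [this, Finset.sum_insert (by simp), add_comm]

/-- `#_{[0,N]}` as the total increment of `⌈(θ₁ - θ₀) / π⌉`. -/
lemma cntCC_eq {a0 b0 a1 b1 : ℤ → ℝ} {z0 z1 : ℝ} {u0 u1 : ℤ → ℝ}
    (ha0 : ∀ n, a0 n < 0) (ha1 : ∀ n, a1 n < 0)
    (h0 : RSol a0 b0 z0 u0) (h1 : RSol a1 b1 z1 u1) (N : ℕ) :
    cntCC a0 a1 u0 u1 0 N =
      changes u1 N - changes u0 N + ahead a0 a1 u0 u1 N - ahead a0 a1 u0 u1 0 := by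
  unfold cntCC changes
  induction N with
  | zero => simp
  | succ N ih =>
    rw [sum_Ico_int_succ, sum_Ico_int_succ, sum_Ico_int_succ, ih,
      jSgn_step ha0 ha1 h0 h1 (by omega)]
    push_cast
    ring

lemma ahead_left {a0 b0 a1 : ℤ → ℝ} {z0 : ℝ} {u0 : ℤ → ℝ} (u1 : ℤ → ℝ)
    (ha0 : ∀ n, a0 n < 0) (h0 : RSol a0 b0 z0 u0) {n : ℤ} (hn : 0 ≤ n) (e : u0 n = 0) :
    ahead a0 a1 u0 u1 n = 0 := by
  have h := sg_mul_succ_neg e (by simpa [e] using h0.ne ha0 hn)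
  have h' := sg_mul_nonneg u1 n
  have hW : sg u0 n * sg u1 n * jW a0 a1 u0 u1 n =
      -((a0 n * (sg u0 n * u0 (n + 1))) * (sg u1 n * u1 n)) := by
    simp only [jW, e]; ring
  have := mul_nonneg (mul_pos_of_neg_of_neg (ha0 n) h).le h'
  rw [ahead, if_neg]
  rw [hW]; linarith

open Classical in
lemma ahead_right {a0 a1 b1 : ℤ → ℝ} {z1 : ℝ} {u1 : ℤ → ℝ} (u0 : ℤ → ℝ)
    (ha1 : ∀ n, a1 n < 0) (h1 : RSol a1 b1 z1 u1) {n : ℤ} (hn : 0 ≤ n) (e : u1 n = 0) :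
    ahead a0 a1 u0 u1 n = if u0 n = 0 then 0 else 1 := by
  by_cases e0 : u0 n = 0
  · simp [ahead, jW, e, e0]
  have h := sg_mul_succ_neg e (by simpa [e] using h1.ne ha1 hn)
  have h' := sg_mul_pos e0
  have hW : sg u0 n * sg u1 n * jW a0 a1 u0 u1 n =
      (a1 n * (sg u1 n * u1 (n + 1))) * (sg u0 n * u0 n) := by
    simp only [jW, e]; ring
  have := mul_pos (mul_pos_of_neg_of_neg (ha1 n) h) h'
  rw [ahead, if_pos (by rwa [hW]), if_neg e0]

/-! ### Dependence on the spectral parameter -/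

lemma jW_succ {a b : ℤ → ℝ} {z0 z1 : ℝ} {u0 u1 : ℤ → ℝ} (h0 : RSol a b z0 u0)
    (h1 : RSol a b z1 u1) {n : ℤ} (hn : 0 ≤ n) :
    jW a a u0 u1 (n + 1) = jW a a u0 u1 n + (z1 - z0) * (u0 (n + 1) * u1 (n + 1)) := by
  simp only [jW]
  linear_combination u0 (n + 1) * h1.recur hn - u1 (n + 1) * h0.recur hn

/-- For a single equation `#_{[0,N]}(u₋, u₊) = 0`, as the Wronskian is constant; this expresses the
sign changes of a solution vanishing at `N` through one vanishing at `0`. -/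
lemma changes_plus {a b : ℤ → ℝ} {z : ℝ} {um up : ℤ → ℝ} (ha : ∀ n, a n < 0)
    (hm : RSol a b z um) (hm0 : um 0 = 0) (hp : RSol a b z up) {N : ℕ} (hpN : up N = 0) :
    changes up N = nodes um N := by
  have h := cntCC_eq ha ha hm hp N
  have h0 : cntCC a a um up 0 N = 0 := by
    apply Finset.sum_eq_zero
    intro j hj
    rw [jSgn_eq, jW_succ hm hp (Finset.mem_Ico.1 hj).1]
    simp
  rw [h0, ahead_left up ha hm le_rfl hm0, ahead_right um ha hp (by omega) hpN] at h
  unfold nodes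
  by_cases e : um N = 0
  · simp only [e, if_true] at h ⊢; omega
  · simp only [e, if_false] at h ⊢; omega

/-- Monotonicity of the node count in the spectral parameter, strict when the upper parameter is an
eigenvalue. -/
lemma nodes_mono {a b : ℤ → ℝ} {z0 z1 : ℝ} {u0 u1 : ℤ → ℝ} (ha : ∀ n, a n < 0) (hz : z0 < z1)
    (h0 : RSol a b z0 u0) (h1 : RSol a b z1 u1) (e0 : u0 0 = 0) (e1 : u1 0 = 0)
    {N : ℕ} (hN : 1 ≤ N) :
    nodes u0 N ≤ nodes u1 N ∧ (u1 N = 0 → nodes u0 N < nodes u1 N) := by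
  have h := cntCC_eq ha ha h0 h1 N
  have hpos : ∀ j : ℤ, 0 ≤ j → 0 ≤ jSgn a a u0 u1 j := by
    intro j hj
    rw [jSgn_eq, jW_succ h0 h1 hj]
    have : 0 ≤ (z1 - z0) * (u0 (j + 1) * u1 (j + 1)) ^ 2 :=
      mul_nonneg (sub_pos.2 hz).le (sq_nonneg _)
    split_ifs with c1 c2
    · simp
    · simp
    · exfalso; apply c1; nlinarith
    · simp
  -- the Wronskian vanishes at `0` and not at `1`
  have hone : jSgn a a u0 u1 0 = 1 := by
    have W0 : jW a a u0 u1 0 = 0 := by simp [jW, e0, e1]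
    rw [jSgn_eq, jW_succ h0 h1 le_rfl, W0]
    have n0 : u0 1 ≠ 0 := by simpa [e0] using h0.1
    have n1 : u1 1 ≠ 0 := by simpa [e1] using h1.1
    have : 0 < (z1 - z0) * (u0 1 * u1 1) * (u0 1 * u1 1) := by
      rw [mul_assoc]
      exact mul_pos (sub_pos.2 hz) (mul_self_pos.2 (mul_ne_zero n0 n1))
    simp [this]
  have hcnt : 1 ≤ cntCC a a u0 u1 0 N := by
    rw [← hone]
    exact Finset.single_le_sum (f := jSgn a a u0 u1)
      (fun j hj => hpos j (Finset.mem_Ico.1 hj).1) (by simp; omega)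
  rw [ahead_left u1 ha h0 le_rfl e0] at h
  have hle : ahead a a u0 u1 N ≤ 1 := by unfold ahead; split_ifs <;> simp
  by_cases k1 : u1 N = 0
  · rw [ahead_right u0 ha h1 (by omega) k1] at h
    unfold nodes
    rw [if_pos k1]
    split_ifs at h ⊢ <;> constructor <;> intros <;> omega
  · refine ⟨?_, fun c => absurd c k1⟩
    by_cases k0 : u0 N = 0
    · rw [ahead_left u1 ha h0 (by omega) k0] at h
      unfold nodes
      simp only [k0, k1, if_true, if_false]
      omega
    · unfold nodes
      simp only [k0, k1, if_false]
      omega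

lemma chg_nonneg (u : ℤ → ℝ) (n : ℤ) : 0 ≤ chg u n := by unfold chg; split_ifs <;> simp
lemma chg_le (u : ℤ → ℝ) (n : ℤ) : chg u n ≤ 1 := by unfold chg; split_ifs <;> simp

lemma changes_le (u : ℤ → ℝ) (N : ℕ) : changes u N ≤ N := by
  have := Finset.sum_le_card_nsmul (Finset.Ico (0 : ℤ) N) (chg u) 1 (fun j _ => chg_le u j)
  simpa [changes] using this

lemma nodes_nonneg {a b : ℤ → ℝ} {z : ℝ} {u : ℤ → ℝ} (h : RSol a b z u)
    (e : u 0 = 0) {N : ℕ} (hN : 1 ≤ N) : 0 ≤ nodes u N := by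
  have n1 : u (0 + 1) ≠ 0 := by simpa [e] using h.1
  have h0 : chg u 0 = 1 := by
    rw [chg_eq n1, if_neg (sg_mul_succ_neg e n1).not_gt]
  have : 1 ≤ changes u N := by
    rw [← h0]
    exact Finset.single_le_sum (f := chg u) (fun j _ => chg_nonneg u j) (by simp; omega)
  unfold nodes
  split_ifs <;> omega

lemma nodes_le {a b : ℤ → ℝ} {z : ℝ} {u : ℤ → ℝ} (ha : ∀ n, a n < 0) (h : RSol a b z u)
    {N : ℕ} (hN : 1 ≤ N) : nodes u N ≤ N - 1 := by
  unfold nodes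
  split_ifs with e
  · obtain ⟨M, rfl⟩ := Nat.exists_eq_add_of_le' hN
    have hs := h.sg_zero ha (n := M) (by omega) (by exact_mod_cast e)
    have hc : chg u M = 0 := by simp [chg, hs]
    have := changes_le u M
    unfold changes at this ⊢
    rw [sum_Ico_int_succ, hc]
    push_cast
    linarith
  · have := changes_le u N
    linarith

lemma exists_rsol {a : ℤ → ℝ} (b : ℤ → ℝ) (ha : ∀ n, a n < 0) (z : ℝ) :
    ∃ u, RSol a b z u ∧ u 0 = 0 := by
  let f : ℕ → ℝ × ℝ := fun n => Nat.rec (0, 1)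
    (fun (k : ℕ) (x : ℝ × ℝ) => (x.2, ((z - b (k + 1)) * x.2 - a k * x.1) / a (k + 1))) n
  have fs : ∀ k : ℕ, f (k + 1) =
      ((f k).2, ((z - b (k + 1)) * (f k).2 - a k * (f k).1) / a (k + 1)) := fun k => rfl
  refine ⟨fun n => (f n.toNat).1, ⟨Or.inr ?_, ?_⟩, ?_⟩
  · simp [f]
  · intro n hn
    obtain ⟨k, rfl⟩ : ∃ k : ℕ, n = k + 1 := ⟨(n - 1).toNat, by omega⟩
    have t1 : ((k : ℤ) + 1).toNat = k + 1 := by omega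
    have t2 : ((k : ℤ) + 1 + 1).toNat = k + 1 + 1 := by omega
    have := (ha (k + 1)).ne
    simp only [jTau, add_sub_cancel_right, t1, t2, Int.toNat_natCast, fs]
    field_simp
    ring
  · simp [f]

/-! ### Eigenvalues of the Jacobi matrix -/

/-- An eigenvector of the Jacobi matrix is a multiple of any solution vanishing at `0`, and the
corresponding multiple of the solution vanishes at `N`. -/
lemma eigenvector_eq {a b : ℤ → ℝ} {z : ℝ} {u : ℤ → ℝ} (ha : ∀ n, a n < 0) (h : RSol a b z u)
    (e : u 0 = 0) {N : ℕ} (hN : 2 ≤ N) {v : Fin (N - 1) → ℝ}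
    (hv : (jMatrix N a b).mulVec v = z • v) :
    ∃ c : ℝ, (∀ i : Fin (N - 1), v i = c * u ((i : ℕ) + 1)) ∧ c * u N = 0 := by
  -- `w` is the eigenvector shifted to the sites `1, …, N - 1` and extended by zero
  let w : ℕ → ℝ := fun k => if hk : k - 1 < N - 1 ∧ 1 ≤ k then v ⟨k - 1, hk.1⟩ else 0
  have w0 : w 0 = 0 := by simp [w]
  have wN : w N = 0 := by simp [w]
  have wv : ∀ i : Fin (N - 1), v i = w (i + 1) := by intro i; simp [w]
  have row : ∀ k : ℕ, k + 1 < N →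
      a (k + 1) * w (k + 2) + a k * w k + b (k + 1) * w (k + 1) = z * w (k + 1) := by
    intro k hk
    have h1 := congrFun hv ⟨k, by omega⟩
    simp only [Matrix.mulVec, dotProduct, jMatrix, Pi.smul_apply, smul_eq_mul, wv] at h1
    rw [Fin.sum_univ_eq_sum_range (fun j : ℕ => (if k = j then b ((k : ℤ) + 1)
      else if k + 1 = j then a ((k : ℤ) + 1) else if j + 1 = k then a ((j : ℤ) + 1) else 0) *
        w (j + 1)) (N - 1)] at h1
    rw [← h1]
    have split : ∀ j : ℕ, (if k = j then b ((k : ℤ) + 1)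
      else if k + 1 = j then a ((k : ℤ) + 1) else if j + 1 = k then a ((j : ℤ) + 1) else 0) *
        w (j + 1) = (if k = j then b (k + 1) * w (k + 1) else 0) +
          (if k + 1 = j then a (k + 1) * w (k + 2) else 0) +
          (if j + 1 = k then a k * w k else 0) := by
      intro j
      by_cases c1 : k = j
      · subst c1; simp
      by_cases c2 : k + 1 = j
      · subst c2; simp; omega
      by_cases c3 : j + 1 = k
      · subst c3; simp [c2]
      simp [c1, c2, c3]
    simp only [split, Finset.sum_add_distrib]
    have s1 : ∑ j ∈ Finset.range (N - 1), (if k = j then b (k + 1) * w (k + 1) else 0)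
        = b (k + 1) * w (k + 1) := by
      rw [Finset.sum_ite_eq, if_pos (by simp; omega)]
    have s2 : ∑ j ∈ Finset.range (N - 1), (if k + 1 = j then a (k + 1) * w (k + 2) else 0)
        = a (k + 1) * w (k + 2) := by
      rw [Finset.sum_ite_eq]
      split_ifs with c
      · rfl
      · have : k + 2 = N := by simp at c; omega
        rw [this, wN, mul_zero]
    have s3 : ∑ j ∈ Finset.range (N - 1), (if j + 1 = k then a k * w k else 0) = a k * w k := by
      rcases k with _ | k
      · simp [w0]
      · simp only [Nat.add_right_cancel_iff]
        rw [Finset.sum_ite_eq', if_pos (by simp; omega)]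
    rw [s1, s2, s3]
    ring
  have n1 : u 1 ≠ 0 := by simpa [e] using h.1
  have key : ∀ k : ℕ, k + 1 ≤ N → w k = w 1 / u 1 * u k ∧ w (k + 1) = w 1 / u 1 * u (k + 1) := by
    intro k
    induction k with
    | zero =>
      intro _
      simp [w0, e, n1]
    | succ k ih =>
      intro hk
      obtain ⟨i1, i2⟩ := ih (by omega)
      have r := row k (by omega)
      have r' := h.recur (n := k) (by omega)
      push_cast
      refine ⟨i2, ?_⟩
      have := (ha (k + 1)).ne
      apply mul_left_cancel₀ this
      rw [i1, i2] at r
      linear_combination r - (w 1 / u 1) * r'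
  refine ⟨w 1 / u 1, ?_, ?_⟩
  · intro i
    rw [wv, (key i (by omega)).2]
  · obtain ⟨M, rfl⟩ := Nat.exists_eq_add_of_le' (show 1 ≤ N by omega)
    have := (key M le_rfl).2
    push_cast
    rw [← this, wN]

lemma eigenvalue_zero {a b : ℤ → ℝ} {z : ℝ} {u : ℤ → ℝ} (ha : ∀ n, a n < 0) (h : RSol a b z u)
    (e : u 0 = 0) {N : ℕ} (hN : 2 ≤ N) (hz : IsEV (jMatrix N a b) z) : u N = 0 := by
  obtain ⟨v, hv, hv'⟩ := hz
  obtain ⟨c, hc, hcN⟩ := eigenvector_eq ha h e hN hv'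
  rcases mul_eq_zero.1 hcN with c0 | c0
  · exact absurd (funext fun i => by simp [hc, c0]) hv
  · exact c0

lemma jMatrix_isHermitian (N : ℕ) (a b : ℤ → ℝ) : (jMatrix N a b).IsHermitian := by
  ext i j
  simp only [Matrix.conjTranspose_apply, jMatrix, star_trivial]
  split_ifs with c1 c2 <;> first | rfl | omega | (congr 2; omega)

/-- The eigenvalues of a Jacobi matrix are simple (two eigenvectors for the same eigenvalue are
proportional, hence not orthogonal), so there are at least `N - 1` different ones. -/
lemma ncard_eigenvalues {a : ℤ → ℝ} (b : ℤ → ℝ) (ha : ∀ n, a n < 0) {N : ℕ} (hN : 2 ≤ N) :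
    {μ | IsEV (jMatrix N a b) μ}.Finite ∧ N - 1 ≤ {μ | IsEV (jMatrix N a b) μ}.ncard := by
  set A := jMatrix N a b with hA
  have hH : A.IsHermitian := jMatrix_isHermitian N a b
  have hinj : Function.Injective hH.eigenvalues := by
    intro i j hij
    by_contra hne
    obtain ⟨u, hu, e⟩ := exists_rsol b ha (hH.eigenvalues i)
    obtain ⟨c, hc, -⟩ := eigenvector_eq ha hu e hN (hH.mulVec_eigenvectorBasis i)
    obtain ⟨d, hd, -⟩ := eigenvector_eq ha hu e hN (by rw [hij]; exact hH.mulVec_eigenvectorBasis j)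
    have ho := hH.eigenvectorBasis.orthonormal
    have h1 := ho.2 hne
    have ni := ho.ne_zero i
    have nj := ho.ne_zero j
    simp only [PiLp.inner_apply, hc, hd] at h1
    have h2 : c * d * ∑ k : Fin (N - 1), u ((k : ℕ) + 1) ^ 2 = 0 := by
      rw [← h1, Finset.mul_sum]
      apply Finset.sum_congr rfl
      intros
      simp
      ring
    have hc0 : c ≠ 0 := by
      rintro rfl
      apply ni; ext k; simp [hc]
    have hd0 : d ≠ 0 := by
      rintro rfl
      apply nj; ext k; simp [hd]
    have h3 := (mul_eq_zero.1 h2).resolve_left (mul_ne_zero hc0 hd0)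
    rw [Finset.sum_eq_zero_iff_of_nonneg (fun _ _ => sq_nonneg _)] at h3
    apply ni; ext k
    have := h3 k (Finset.mem_univ _)
    simp at this
    simp [hc, this]
  have hsub : {μ | IsEV A μ} = Set.range hH.eigenvalues := by
    rw [← hH.spectrum_real_eq_range_eigenvalues]
    ext μ
    rw [← Matrix.spectrum_toLin', ← Module.End.hasEigenvalue_iff_mem_spectrum]
    constructor
    · rintro ⟨v, hv, hv'⟩
      exact Module.End.hasEigenvalue_of_hasEigenvector (x := v)
        (Module.End.hasEigenvector_iff.2 ⟨Module.End.mem_eigenspace_iff.2 (by simpa using hv'), hv⟩)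
    · intro h
      obtain ⟨v, hv⟩ := h.exists_hasEigenvector
      exact ⟨v, hv.2, by simpa using hv.apply_eq_smul⟩
  rw [hsub]
  refine ⟨Set.finite_range _, ?_⟩
  rw [← Set.image_univ, Set.ncard_image_of_injective _ hinj, Set.ncard_univ]
  simp

/-! ### Sturm oscillation -/

/-- Sturm oscillation. The node count is monotone in the spectral parameter, takes values in
`[0, N - 1]`, and increases at each of the `N - 1` eigenvalues, so it increases by exactly one at
each of them and nowhere else. -/
lemma evCount_eq_nodes {a b : ℤ → ℝ} {z : ℝ} {u : ℤ → ℝ} (ha : ∀ n, a n < 0) (h : RSol a b z u)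
    (e : u 0 = 0) {N : ℕ} (hN : 2 ≤ N) :
    (evCount (jMatrix N a b) (Set.Iic z) : ℤ) = nodes u N := by
  have hex : ∀ μ : ℝ, ∃ v, RSol a b μ v ∧ v 0 = 0 ∧ (μ = z → v = u) := by
    intro μ
    by_cases hμ : μ = z
    · subst hμ; exact ⟨u, h, e, fun _ => rfl⟩
    · obtain ⟨v, hv, hv0⟩ := exists_rsol b ha μ
      exact ⟨v, hv, hv0, fun c => absurd c hμ⟩
  choose U hU hU0 hUz using hex
  have hUz' : U z = u := hUz z rfl
  let M : ℝ → ℤ := fun μ => nodes (U μ) N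
  have hmono : ∀ {x y : ℝ}, x ≤ y → M x ≤ M y := by
    intro x y hxy
    rcases hxy.eq_or_lt with rfl | hxy
    · rfl
    · exact (nodes_mono ha hxy (hU x) (hU y) (hU0 x) (hU0 y) (by omega)).1
  have hstrict : ∀ {x y : ℝ}, x < y → IsEV (jMatrix N a b) y → M x < M y := fun hxy hy =>
    (nodes_mono ha hxy (hU _) (hU _) (hU0 _) (hU0 _) (by omega)).2
      (eigenvalue_zero ha (hU _) (hU0 _) hN hy)
  obtain ⟨hfin, hcard⟩ := ncard_eigenvalues b ha hN
  have hinj : Set.InjOn M {μ | IsEV (jMatrix N a b) μ} := by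
    intro x hx y hy hxy
    rcases lt_trichotomy x y with hlt | heq | hlt
    · exact absurd hxy (hstrict hlt hy).ne
    · exact heq
    · exact absurd hxy (hstrict hlt hx).ne'
  have c1 : ({μ ∈ Set.Iic z | IsEV (jMatrix N a b) μ}.ncard : ℤ) ≤ M z := by
    have hle := Set.ncard_le_ncard_of_injOn (s := {μ ∈ Set.Iic z | IsEV (jMatrix N a b) μ})
      (t := (Finset.Icc (1 : ℤ) (M z) : Set ℤ)) M
      (by
        rintro μ ⟨hμ, hμ'⟩
        have h1 := hstrict (sub_one_lt μ) hμ'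
        have h2 : 0 ≤ M (μ - 1) := nodes_nonneg (hU _) (hU0 _) (by omega)
        have h3 := hmono (Set.mem_Iic.1 hμ)
        simp only [Finset.coe_Icc, Set.mem_Icc]
        omega)
      (hinj.mono fun μ hμ => hμ.2) (Finset.finite_toSet _)
    rw [Set.ncard_coe_finset, Int.card_Icc] at hle
    have h2 : 0 ≤ M z := nodes_nonneg (hU _) (hU0 _) (by omega)
    omega
  have c2 : ({μ ∈ Set.Ioi z | IsEV (jMatrix N a b) μ}.ncard : ℤ) ≤ N - 1 - M z := by
    have hle := Set.ncard_le_ncard_of_injOn (s := {μ ∈ Set.Ioi z | IsEV (jMatrix N a b) μ})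
      (t := (Finset.Icc (M z + 1) ((N : ℤ) - 1) : Set ℤ)) M
      (by
        rintro μ ⟨hμ, hμ'⟩
        have h1 := hstrict (Set.mem_Ioi.1 hμ) hμ'
        have h2 : M μ ≤ N - 1 := nodes_le ha (hU _) (by omega)
        simp only [Finset.coe_Icc, Set.mem_Icc]
        omega)
      (hinj.mono fun μ hμ => hμ.2) (Finset.finite_toSet _)
    rw [Set.ncard_coe_finset, Int.card_Icc] at hle
    have h2 : M z ≤ N - 1 := nodes_le ha (hU _) (by omega)
    omega
  have c3 : {μ | IsEV (jMatrix N a b) μ}.ncard ≤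
      {μ ∈ Set.Iic z | IsEV (jMatrix N a b) μ}.ncard +
        {μ ∈ Set.Ioi z | IsEV (jMatrix N a b) μ}.ncard := by
    refine le_trans (Set.ncard_le_ncard ?_ ?_) (Set.ncard_union_le _ _)
    · intro μ hμ
      rcases le_or_gt μ z with hle | hlt
      · exact Or.inl ⟨hle, hμ⟩
      · exact Or.inr ⟨hlt, hμ⟩
    · exact (hfin.subset fun μ hμ => hμ.2).union (hfin.subset fun μ hμ => hμ.2)
  have hMz : M z = nodes u N := by simp only [M, hUz']
  unfold evCount
  omega

/-- Relative Oscillation Theorem (case 2). -/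
theorem stmt_2 (N : ℕ) (hN : 2 ≤ N)
    (a0 b0 a1 b1 : ℤ → ℝ)
    (ha0 : ∀ n : ℤ, a0 n < 0) (ha1 : ∀ n : ℤ, a1 n < 0)
    (lam0 lam1 : ℝ)
    (u0m u0p u1m u1p : ℤ → ℝ)
    (h0m : IsJSolution a0 b0 lam0 u0m) (h0m0 : u0m 0 = 0)
    (h0p : IsJSolution a0 b0 lam0 u0p) (h0pN : u0p (N : ℤ) = 0)
    (h1m : IsJSolution a1 b1 lam1 u1m) (h1m0 : u1m 0 = 0)
    (h1p : IsJSolution a1 b1 lam1 u1p) (h1pN : u1p (N : ℤ) = 0) :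
    ((evCount (jMatrix N a1 b1) (Set.Iic lam1) : ℤ)
        - (evCount (jMatrix N a0 b0) (Set.Iic lam0) : ℤ)
      = cntOO a0 a1 u0p u1m 0 (N : ℤ)) ∧
    ((evCount (jMatrix N a1 b1) (Set.Iic lam1) : ℤ)
        - (evCount (jMatrix N a0 b0) (Set.Iic lam0) : ℤ)
      = cntCC a0 a1 u0m u1p 0 (N : ℤ)) := by
  have s0m := h0m.rsol ha0
  have s0p := h0p.rsol ha0
  have s1m := h1m.rsol ha1
  have s1p := h1p.rsol ha1
  rw [evCount_eq_nodes ha0 s0m h0m0 hN, evCount_eq_nodes ha1 s1m h1m0 hN]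
  have k0 := changes_plus ha0 s0m h0m0 s0p h0pN
  have k1 := changes_plus ha1 s1m h1m0 s1p h1pN
  constructor
  · have W0 : jW a0 a1 u0p u1m 0 = 0 ↔ u0p 0 = 0 := by
      have : u1m 1 ≠ 0 := by simpa [h1m0] using s1m.1
      simp [jW, h1m0, this, (ha1 0).ne]
    have WN : jW a0 a1 u0p u1m N = 0 ↔ u1m N = 0 := by
      have : u0p (N + 1) ≠ 0 := by simpa [h0pN] using s0p.ne ha0 (n := N) (by omega)
      simp [jW, h0pN, this, (ha0 N).ne]
    have c := cntCC_eq ha0 ha1 s0p s1m N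
    rw [ahead_left u1m ha0 s0p (by omega) h0pN, ahead_right u0p ha1 s1m le_rfl h1m0] at c
    unfold cntOO
    simp only [W0, WN]
    rw [← k0, c]
    unfold nodes
    split_ifs <;> omega
  · have c := cntCC_eq ha0 ha1 s0m s1p N
    rw [ahead_left u1p ha0 s0m le_rfl h0m0, ahead_right u0m ha1 s1p (by omega) h1pN] at c
    rw [c, ← k1]
    unfold nodes
    split_ifs <;> omega
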